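/- Let E be a real Hilbert space, G ⊆ E a closed subspace with orthogonal complement G^⊥, and Ψ: E → ℝ a Fréchet C^1 functional such that there is ω > 0 with ⟨Ψ′(u) − Ψ′(v), u − v⟩ ≥ (ω/2)‖u − v‖² whenever u − v ∈ G^⊥. Then for every g ∈ G the function h ↦ Ψ(g + h) on G^⊥ attains a unique minimum at some point h(g) ∈ G^⊥, and h(g) is the unique element of G^⊥ satisfying ⟨Ψ′(g + h(g)), h⟩ = 0 for all h ∈ G^⊥. -/

import Mathlib

theorem rum_aux {E : Type*} [NormedAddCommGroup E] [InnerProductSpace ℝ E]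
    (Ψ : E → ℝ) (hΨ : Differentiable ℝ Ψ) (u d : E) (t : ℝ) :
    HasDerivAt (fun s : ℝ => Ψ (u + s • d)) (fderiv ℝ Ψ (u + t • d) d) t := by
  have h1 : HasDerivAt (fun s : ℝ => u + s • d) d t := by
    simpa using ((hasDerivAt_id t).smul_const d).const_add u
  exact (hΨ (u + t • d)).hasFDerivAt.comp_hasDerivAt t h1

theorem rum_lower {E : Type*} [NormedAddCommGroup E] [InnerProductSpace ℝ E]
    (G : Submodule ℝ E) (Ψ : E → ℝ) (hΨ : Differentiable ℝ Ψ) (ω : ℝ)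
    (hconv : ∀ u v : E, u - v ∈ Gᗮ →
      (ω / 2) * ‖u - v‖ ^ 2 ≤ fderiv ℝ Ψ u (u - v) - fderiv ℝ Ψ v (u - v))
    (u d : E) (hd : d ∈ Gᗮ) :
    Ψ u + fderiv ℝ Ψ u d + ω / 4 * ‖d‖ ^ 2 ≤ Ψ (u + d) := by
  have hder : ∀ t : ℝ, HasDerivAt
      (fun s : ℝ => Ψ (u + s • d) - s * fderiv ℝ Ψ u d - s ^ 2 * (ω / 4 * ‖d‖ ^ 2))
      (fderiv ℝ Ψ (u + t • d) d - fderiv ℝ Ψ u d - 2 * t * (ω / 4 * ‖d‖ ^ 2)) t := by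
    intro t
    have h2 : HasDerivAt (fun s : ℝ => s * fderiv ℝ Ψ u d) (fderiv ℝ Ψ u d) t := by
      simpa using (hasDerivAt_id t).mul_const (fderiv ℝ Ψ u d)
    have h3 : HasDerivAt (fun s : ℝ => s ^ 2 * (ω / 4 * ‖d‖ ^ 2))
        (2 * t * (ω / 4 * ‖d‖ ^ 2)) t := by
      simpa using (hasDerivAt_pow 2 t).mul_const (ω / 4 * ‖d‖ ^ 2)
    exact ((rum_aux Ψ hΨ u d t).sub h2).sub h3
  have hmono := monotoneOn_of_deriv_nonneg (convex_Icc (0 : ℝ) 1)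
    (fun t _ => (hder t).continuousAt.continuousWithinAt)
    (fun t _ => (hder t).differentiableAt.differentiableWithinAt)
    (fun t ht => by
      rw [(hder t).deriv]
      rw [interior_Icc] at ht
      have h := hconv (u + t • d) u (by simpa using Submodule.smul_mem _ t hd)
      simp only [add_sub_cancel_left, map_smul, smul_eq_mul, norm_smul, Real.norm_eq_abs,
        mul_pow, sq_abs] at h
      have ht0 := ht.1
      have : 0 ≤ t * (fderiv ℝ Ψ (u + t • d) d - fderiv ℝ Ψ u d - 2 * t * (ω / 4 * ‖d‖ ^ 2)) := by
        nlinarith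
      exact nonneg_of_mul_nonneg_right this ht0)
  have := hmono (by simp : (0:ℝ) ∈ Set.Icc (0:ℝ) 1) (by simp : (1:ℝ) ∈ Set.Icc (0:ℝ) 1) zero_le_one
  simp at this
  linarith

/-- Part (i) of the finite-dimensional reduction (Lemma 2.10): if `Ψ` is `C¹`
and uniformly convex in the directions of `G^⊥`, then for every `g ∈ G` the
function `h ↦ Ψ(g + h)` on `G^⊥` attains a unique minimum `h₀`, characterized
by `Ψ′(g + h₀)` vanishing on `G^⊥`. -/
theorem reduction_unique_minimum
    (E : Type*) [NormedAddCommGroup E] [InnerProductSpace ℝ E] [CompleteSpace E]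
    (G : Submodule ℝ E) (hG : IsClosed (G : Set E))
    (Ψ : E → ℝ) (hΨ : ContDiff ℝ 1 Ψ)
    (ω : ℝ) (hω : 0 < ω)
    (hconv : ∀ u v : E, u - v ∈ Gᗮ →
      (ω / 2) * ‖u - v‖ ^ 2 ≤ fderiv ℝ Ψ u (u - v) - fderiv ℝ Ψ v (u - v)) :
    ∀ g ∈ G, ∃ h₀ ∈ Gᗮ,
      (∀ h ∈ Gᗮ, Ψ (g + h₀) ≤ Ψ (g + h)) ∧
      (∀ h' ∈ Gᗮ, (∀ h ∈ Gᗮ, Ψ (g + h') ≤ Ψ (g + h)) → h' = h₀) ∧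
      (∀ h ∈ Gᗮ, fderiv ℝ Ψ (g + h₀) h = 0) ∧
      (∀ h' ∈ Gᗮ, (∀ h ∈ Gᗮ, fderiv ℝ Ψ (g + h') h = 0) → h' = h₀) := by
  intro g _
  have hdiff : Differentiable ℝ Ψ := hΨ.differentiable (by norm_num)
  have hlow := rum_lower G Ψ hdiff ω hconv
  have hcrit : ∀ h₀ ∈ Gᗮ, (∀ h ∈ Gᗮ, Ψ (g + h₀) ≤ Ψ (g + h)) →
      ∀ h ∈ Gᗮ, fderiv ℝ Ψ (g + h₀) h = 0 := by
    intro h₀ hh₀ hmin h hh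
    have h1 := rum_aux Ψ hdiff (g + h₀) h 0
    have h2 : IsLocalMin (fun s : ℝ => Ψ (g + h₀ + s • h)) 0 := by
      refine Filter.Eventually.of_forall fun s => ?_
      simpa [add_assoc] using hmin (h₀ + s • h) (Gᗮ.add_mem hh₀ (Gᗮ.smul_mem s hh))
    simpa using h2.hasDerivAt_eq_zero h1
  have huniq : ∀ h₀ ∈ Gᗮ, ∀ h' ∈ Gᗮ, (∀ h ∈ Gᗮ, fderiv ℝ Ψ (g + h₀) h = 0) →
      Ψ (g + h') ≤ Ψ (g + h₀) → h' = h₀ := by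
    intro h₀ hh₀ h' hh' hc hle
    have h1 := hlow (g + h₀) (h' - h₀) (Gᗮ.sub_mem hh' hh₀)
    rw [hc _ (Gᗮ.sub_mem hh' hh₀), show g + h₀ + (h' - h₀) = g + h' by abel] at h1
    have h2 : ‖h' - h₀‖ ^ 2 ≤ 0 := by
      by_contra hcon
      push Not at hcon
      have := mul_pos hω hcon
      linarith
    have h3 : ‖h' - h₀‖ = 0 := by
      have := sq_nonneg ‖h' - h₀‖
      exact pow_eq_zero_iff (two_ne_zero) |>.1 (le_antisymm h2 this)
    exact sub_eq_zero.1 (norm_eq_zero.1 h3)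
  have hmid : ∀ x ∈ Gᗮ, ∀ y ∈ Gᗮ, ∃ z ∈ Gᗮ,
      2 * Ψ (g + z) + ω / 8 * ‖x - y‖ ^ 2 ≤ Ψ (g + x) + Ψ (g + y) := by
    intro x hx y hy
    have hz : (1/2 : ℝ) • (x + y) ∈ Gᗮ := Gᗮ.smul_mem _ (Gᗮ.add_mem hx hy)
    have hd : (1/2 : ℝ) • (x - y) ∈ Gᗮ := Gᗮ.smul_mem _ (Gᗮ.sub_mem hx hy)
    refine ⟨_, hz, ?_⟩
    have h1 := hlow (g + (1/2 : ℝ) • (x + y)) _ hd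
    have h2 := hlow (g + (1/2 : ℝ) • (x + y)) _ (Gᗮ.neg_mem hd)
    rw [show g + (1/2 : ℝ) • (x + y) + (1/2 : ℝ) • (x - y) = g + x by module] at h1
    rw [show g + (1/2 : ℝ) • (x + y) + -((1/2 : ℝ) • (x - y)) = g + y by module,
      map_neg, norm_neg] at h2
    have h3 : ‖(1/2 : ℝ) • (x - y)‖ ^ 2 = 1/4 * ‖x - y‖ ^ 2 := by
      rw [norm_smul, mul_pow]; norm_num
    rw [h3] at h1 h2
    linarith
  have hbdd : BddBelow ((fun h => Ψ (g + h)) '' (Gᗮ : Set E)) := by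
    refine ⟨Ψ g - ‖fderiv ℝ Ψ g‖ ^ 2 / ω, ?_⟩
    rintro _ ⟨h, hh, rfl⟩
    have h1 := hlow g h hh
    have h2 := (abs_le.1 ((fderiv ℝ Ψ g).le_opNorm h)).1
    have h3 : 0 ≤ ‖fderiv ℝ Ψ g‖ ^ 2 / ω - ‖fderiv ℝ Ψ g‖ * ‖h‖ + ω / 4 * ‖h‖ ^ 2 := by
      have : ‖fderiv ℝ Ψ g‖ ^ 2 / ω - ‖fderiv ℝ Ψ g‖ * ‖h‖ + ω / 4 * ‖h‖ ^ 2
        = (‖fderiv ℝ Ψ g‖ - ω / 2 * ‖h‖) ^ 2 / ω := by field_simp; ring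
      rw [this]; positivity
    dsimp only
    linarith
  have hne : ((fun h => Ψ (g + h)) '' (Gᗮ : Set E)).Nonempty := ⟨_, 0, Gᗮ.zero_mem, rfl⟩
  obtain ⟨m, hm⟩ : ∃ m, m = sInf ((fun h => Ψ (g + h)) '' (Gᗮ : Set E)) := ⟨_, rfl⟩
  have hmle : ∀ h ∈ Gᗮ, m ≤ Ψ (g + h) := fun h hh => hm ▸ csInf_le hbdd ⟨h, hh, rfl⟩
  have hseq : ∀ n : ℕ, ∃ h ∈ Gᗮ, Ψ (g + h) < m + 1 / ((n : ℝ) + 1) := by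
    intro n
    obtain ⟨_, ⟨h, hh, rfl⟩, hlt⟩ := exists_lt_of_csInf_lt hne
      (show sInf _ < m + 1 / ((n : ℝ) + 1) by rw [← hm]; linarith [Nat.one_div_pos_of_nat (α := ℝ) (n := n)])
    exact ⟨h, hh, hlt⟩
  choose s hs hsm using hseq
  have hcau : CauchySeq s := by
    refine cauchySeq_of_le_tendsto_0 (fun N : ℕ => √(16 / ω * (1 / ((N : ℝ) + 1)))) ?_ ?_
    · intro n k N hn hk
      obtain ⟨z, hz, hzz⟩ := hmid _ (hs n) _ (hs k)
      have h1 := hmle z hz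
      have h2 := Nat.one_div_le_one_div (α := ℝ) hn
      have h3 := Nat.one_div_le_one_div (α := ℝ) hk
      have h4 := hsm n
      have h5 := hsm k
      rw [dist_eq_norm]
      apply Real.le_sqrt_of_sq_le
      have h6 : ω / 8 * ‖s n - s k‖ ^ 2 ≤ 2 * (1 / ((N : ℝ) + 1)) := by linarith
      calc ‖s n - s k‖ ^ 2 = 8 / ω * (ω / 8 * ‖s n - s k‖ ^ 2) := by field_simp
        _ ≤ 8 / ω * (2 * (1 / ((N : ℝ) + 1))) := by gcongr
        _ = _ := by ring
    · have := ((tendsto_one_div_add_atTop_nhds_zero_nat (𝕜 := ℝ)).const_mul (16 / ω)).sqrt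
      simpa using this
  obtain ⟨h₀, hlim⟩ := cauchySeq_tendsto_of_complete hcau
  have hh₀ : h₀ ∈ Gᗮ := (Submodule.isClosed_orthogonal G).mem_of_tendsto hlim
    (Filter.Eventually.of_forall hs)
  have hval : Ψ (g + h₀) ≤ m := by
    have h1 := (hdiff.continuous.tendsto (g + h₀)).comp (hlim.const_add g)
    have h2 := (tendsto_one_div_add_atTop_nhds_zero_nat (𝕜 := ℝ)).const_add m
    rw [add_zero] at h2
    exact le_of_tendsto_of_tendsto' h1 h2 fun n => (hsm n).le
  have hmin : ∀ h ∈ Gᗮ, Ψ (g + h₀) ≤ Ψ (g + h) := fun h hh => hval.trans (hmle h hh)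
  have hc := hcrit h₀ hh₀ hmin
  exact ⟨h₀, hh₀, hmin, fun h' hh' hm' => huniq h₀ hh₀ h' hh' hc (hm' _ hh₀), hc,
    fun h' hh' hc' => (huniq h' hh' h₀ hh₀ hc' (hmin _ hh')).symm⟩
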